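/- Under the CFL-type condition Δt/h^α ≤ 1/(2 ε C_α (1 + 1/α − ζ(α−1))), the third-order TVD Runge-Kutta time discretization of the semi-discrete natural scheme satisfies the discrete maximum principle: if M ≥ 0 and 0 ≤ P^0_j ≤ M for all j ∈ ℤ (with P^0_j = 0 for |j| ≥ J), then for every n ≥ 0 and every j ∈ ℤ one has 0 ≤ P^n_j ≤ M, where P^{n+1} = (1/3)P^n + (2/3)U^{(2)} + (2/3)Δt R(U^{(2)}), U^{(2)} = (3/4)P^n + (1/4)U^{(1)} + (1/4)Δt R(U^{(1)}), U^{(1)} = P^n + Δt R(P^n). -/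

import Mathlib

open scoped BigOperators

/-- The constant `C_α = α Γ((1+α)/2) / (2^{1-α} √π Γ(1-α/2))`. -/
noncomputable def Cconst (α : ℝ) : ℝ :=
  α * Real.Gamma ((1 + α) / 2) /
    ((2 : ℝ) ^ (1 - α) * Real.sqrt Real.pi * Real.Gamma (1 - α / 2))

/-- The real value of the Riemann zeta function at a real argument. -/
noncomputable def zetaR (s : ℝ) : ℝ := (riemannZeta (s : ℂ)).re

/-- The double-primed sum `Σ''_{k=a, k≠0}^{b} g(k)`: the sum over integers `a ≤ k ≤ b`,
omitting `k = 0`, where the end terms `k = a` and `k = b` carry weight `1/2`. -/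
noncomputable def dsum (a b : ℤ) (g : ℤ → ℝ) : ℝ :=
  ∑ k ∈ (Finset.Icc a b).erase 0, (if k = a ∨ k = b then (1 : ℝ) / 2 else 1) * g k

/-- The semi-discrete operator `R` for the natural condition. -/
noncomputable def Rnat (α ε h : ℝ) (J : ℤ) (U : ℤ → ℝ) : ℤ → ℝ := fun j =>
  if |j| < J then
    -(ε * Cconst α * zetaR (α - 1) * h ^ (-α)) * (U (j - 1) - 2 * U j + U (j + 1))
      + ε * Cconst α * h *
          dsum (-J - j) (J - j) (fun k => (U (j + k) - U j) / |(k : ℝ) * h| ^ (1 + α))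
  else 0


noncomputable def frR (t : ℝ) : ℝ := Set.indicator (Set.Ioi 1) (fun t : ℝ => t - (⌊t⌋₊ : ℝ)) t
noncomputable def frC (t : ℝ) : ℂ := (frR t : ℂ)

lemma frR_nonneg (t : ℝ) : 0 ≤ frR t := by
  unfold frR
  apply Set.indicator_nonneg
  intro x hx
  have := Nat.floor_le (show (0:ℝ) ≤ x from (zero_lt_one.trans hx).le)
  linarith

lemma frR_le (t : ℝ) : frR t ≤ 1 := by
  unfold frR
  apply Set.indicator_le'
  · intro x hx
    have := Nat.lt_floor_add_one x
    linarith
  · intro _ _; simp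

lemma frC_norm (t : ℝ) : ‖frC t‖ ≤ 1 := by
  unfold frC
  rw [Complex.norm_real, Real.norm_of_nonneg (frR_nonneg t)]
  exact frR_le t

lemma frC_meas : Measurable frC := by
  unfold frC frR
  apply Complex.measurable_ofReal.comp
  apply Measurable.indicator _ measurableSet_Ioi
  fun_prop

lemma frC_loc : MeasureTheory.LocallyIntegrableOn frC (Set.Ioi 0) := by
  apply MeasureTheory.LocallyIntegrable.locallyIntegrableOn
  have h1 : MeasureTheory.LocallyIntegrable (fun _ : ℝ => (1:ℝ)) :=
    MeasureTheory.locallyIntegrable_const 1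
  exact h1.mono frC_meas.aestronglyMeasurable (Filter.Eventually.of_forall fun t => by
    simpa using frC_norm t)

lemma frC_top : frC =O[Filter.atTop] (fun t : ℝ => t ^ (-(0:ℝ))) := by
  apply Asymptotics.IsBigO.of_bound 1
  exact Filter.Eventually.of_forall fun t => by simpa using frC_norm t

lemma frC_bot (b : ℝ) : frC =O[nhdsWithin 0 (Set.Ioi 0)] (fun t : ℝ => t ^ (-b)) := by
  apply Asymptotics.IsBigO.of_bound 1
  have : Set.Iio (1:ℝ) ∈ nhdsWithin (0:ℝ) (Set.Ioi 0) :=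
    mem_nhdsWithin_of_mem_nhds (Iio_mem_nhds zero_lt_one)
  filter_upwards [this] with t ht
  have : frC t = 0 := by
    simp [frC, frR, Set.indicator, not_lt.2 (le_of_lt (Set.mem_Iio.1 ht))]
  rw [this]; simp

lemma frC_diff {s : ℂ} (hs : 0 < s.re) : DifferentiableAt ℂ (mellin frC) (-s) :=
  mellin_differentiableAt_of_isBigO_rpow frC_loc frC_top (by simpa using hs)
    (frC_bot (-s.re - 1)) (by simp)

lemma frC_conv {s : ℂ} (hs : 0 < s.re) : MellinConvergent frC (-s) :=
  mellinConvergent_of_isBigO_rpow frC_loc frC_top (by simpa using hs)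
    (frC_bot (-s.re - 1)) (by simp)

lemma mellin_frC (s : ℂ) : mellin frC (-s) =
    ∫ t in Set.Ioi (1:ℝ), (t:ℂ) ^ (-s - 1) * ((t:ℂ) - (⌊t⌋₊ : ℂ)) := by
  unfold mellin
  have : ∀ t : ℝ, (t:ℂ) ^ (-s - 1) • frC t =
     Set.indicator (Set.Ioi 1) (fun t : ℝ => (t:ℂ) ^ (-s - 1) * ((t:ℂ) - (⌊t⌋₊ : ℂ))) t := by
    intro t
    by_cases h : 1 < t <;> simp [frC, frR, Set.indicator, h]
  simp_rw [this]
  rw [MeasureTheory.setIntegral_indicator measurableSet_Ioi]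
  congr 2
  exact Set.inter_eq_right.2 (Set.Ioi_subset_Ioi zero_le_one)

lemma frC_int {s : ℂ} (hs : 0 < s.re) : MeasureTheory.IntegrableOn
    (fun t : ℝ => (t:ℂ) ^ (-s - 1) * ((t:ℂ) - (⌊t⌋₊ : ℂ))) (Set.Ioi (1:ℝ)) := by
  have := (frC_conv hs).mono_set (show Set.Ioi (1:ℝ) ⊆ Set.Ioi 0 from
    Set.Ioi_subset_Ioi zero_le_one)
  refine this.congr_fun (fun t ht => ?_) measurableSet_Ioi
  have h : 1 < t := ht
  simp [frC, frR, Set.indicator, h]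

lemma zeta_int {s : ℂ} (hs : 1 < s.re) :
    (s - 1) * riemannZeta s = s - s * (s - 1) * mellin frC (-s) := by
  have h1 : s - 1 ≠ 0 := by
    intro h
    have : s = 1 := by linear_combination h
    simp [this] at hs
  have hL := LSeries_eq_mul_integral (1 : ℕ → ℂ) (r := 1) zero_le_one hs
    (LSeriesHasSum_one hs).LSeriesSummable
    (by simpa using Asymptotics.isBigO_of_le _ (fun n : ℕ => by simp))
  rw [LSeries_one_eq_riemannZeta hs] at hL
  have hi := integrableOn_Ioi_cpow_of_lt (a := -s) (by simpa using hs) zero_lt_one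
  have hv := integral_Ioi_cpow_of_lt (a := -s) (by simpa using hs) zero_lt_one
  have hI : ∫ t in Set.Ioi (1 : ℝ), (∑ k ∈ Finset.Icc 1 ⌊t⌋₊, (1 : ℕ → ℂ) k) * (t:ℂ) ^ (-(s + 1))
      = ∫ t in Set.Ioi (1 : ℝ), ((t:ℂ) ^ (-s) - (t:ℂ) ^ (-s - 1) * ((t:ℂ) - (⌊t⌋₊ : ℂ))) := by
    apply MeasureTheory.setIntegral_congr_fun measurableSet_Ioi
    intro t ht
    have ht0 : (t:ℂ) ≠ 0 := by
      have : (0:ℝ) < t := zero_lt_one.trans ht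
      exact_mod_cast this.ne'
    have e1 : (t:ℂ) ^ (-s) = (t:ℂ) ^ (-s-1) * t := by
      rw [Complex.cpow_sub _ _ ht0, Complex.cpow_one]; field_simp
    have e2 : -(s+1) = -s-1 := by ring
    simp only [Pi.one_apply, Finset.sum_const, Nat.card_Icc, e1, e2]
    simp
    ring
  rw [hL, hI, MeasureTheory.integral_sub hi (frC_int (by linarith)), ← mellin_frC, hv]
  have h2 : -s + 1 ≠ 0 := by
    intro h; apply h1; linear_combination -h
  simp
  field_simp
  ring

lemma zeta1_eq {s : ℂ} (hs : 0 < s.re) :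
    riemannZeta₁ s = s - s * (s - 1) * mellin frC (-s) := by
  have hopen : IsOpen {s : ℂ | 0 < s.re} := isOpen_lt continuous_const Complex.continuous_re
  have hF : AnalyticOnNhd ℂ riemannZeta₁ {s : ℂ | 0 < s.re} :=
    (differentiable_riemannZeta₁.differentiableOn).analyticOnNhd hopen
  have hG : AnalyticOnNhd ℂ (fun s => s - s * (s - 1) * mellin frC (-s)) {s : ℂ | 0 < s.re} := by
    apply DifferentiableOn.analyticOnNhd _ hopen
    intro z hz
    apply DifferentiableAt.differentiableWithinAt
    have : DifferentiableAt ℂ (fun z => mellin frC (-z)) z :=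
      DifferentiableAt.comp (g := mellin frC) (f := fun z : ℂ => -z) z (frC_diff hz) (by fun_prop)
    fun_prop
  have hpre : IsPreconnected {s : ℂ | 0 < s.re} := (convex_halfSpace_re_gt 0).isPreconnected
  refine hF.eqOn_of_preconnected_of_eventuallyEq hG hpre (z₀ := 2) (by simp) ?_ hs
  have : {s : ℂ | 1 < s.re} ∈ nhds (2:ℂ) :=
    (isOpen_lt continuous_const Complex.continuous_re).mem_nhds (by simp)
  filter_upwards [this] with z hz
  have h1 : z ≠ 1 := by rintro rfl; simp at hz
  rw [← zeta_int hz, riemannZeta_eq_inv_sub_mul h1]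
  have : z - 1 ≠ 0 := sub_ne_zero.2 h1
  field_simp

lemma zetaR_pos_part {s : ℝ} (h0 : 0 < s) (h1 : s < 1) : zetaR s ≤ 0 := by
  have hne : (s:ℂ) ≠ 1 := by exact_mod_cast h1.ne
  have hne' : (s:ℂ) - 1 ≠ 0 := sub_ne_zero.2 hne
  have e := zeta1_eq (s := (s:ℂ)) (by simpa using h0)
  have e2 : ((s:ℂ) - 1) * riemannZeta s = riemannZeta₁ s := by
    rw [riemannZeta_eq_inv_sub_mul hne]; field_simp
  have hm : mellin frC (-(s:ℂ)) = ((∫ t in Set.Ioi (0:ℝ), t ^ (-s - 1) * frR t : ℝ) : ℂ) := by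
    unfold mellin
    rw [← integral_complex_ofReal]
    apply MeasureTheory.setIntegral_congr_fun measurableSet_Ioi
    intro t ht
    have : (0:ℝ) ≤ t := le_of_lt ht
    simp [frC, Complex.ofReal_cpow this]
  have hI : 0 ≤ ∫ t in Set.Ioi (0:ℝ), t ^ (-s - 1) * frR t := by
    apply MeasureTheory.setIntegral_nonneg measurableSet_Ioi
    intro t ht
    exact mul_nonneg (Real.rpow_nonneg (le_of_lt ht) _) (frR_nonneg t)
  set I := ∫ t in Set.Ioi (0:ℝ), t ^ (-s - 1) * frR t
  rw [e, hm] at e2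
  have e3 := congrArg Complex.re e2
  have e4 : ((s:ℂ) - s * (s-1) * (I:ℂ)) = ((s - s * (s-1) * I : ℝ) : ℂ) := by push_cast; ring
  have e5 : ((s:ℂ) - 1) = ((s - 1 : ℝ) : ℂ) := by push_cast; ring
  rw [e4, e5, Complex.re_ofReal_mul, Complex.ofReal_re] at e3
  unfold zetaR
  by_contra hc
  push Not at hc
  have : 0 ≤ s * (1 - s) * I := mul_nonneg (mul_nonneg h0.le (by linarith)) hI
  nlinarith

lemma zetaR_neg_part {s : ℝ} (h0 : -1 < s) (h1 : s < 0) : zetaR s ≤ 0 := by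
  have hz : 0 < (riemannZeta ((1 - s : ℝ) : ℂ)).re := riemannZeta_re_pos_of_one_lt (by linarith)
  have e := riemannZeta_one_sub (s := ((1 - s : ℝ) : ℂ))
    (by
      intro n h
      have h' : (1 - s : ℝ) = -(n:ℝ) := by exact_mod_cast h
      have : (0:ℝ) ≤ n := n.cast_nonneg
      linarith)
    (by
      intro h
      have : (1 - s : ℝ) = 1 := by exact_mod_cast h
      linarith)
  have a1 : (1:ℂ) - ((1 - s : ℝ) : ℂ) = (s:ℂ) := by push_cast; ring
  have a2 : (2:ℂ) * (2 * (Real.pi:ℂ)) ^ (-((1 - s : ℝ) : ℂ)) * Complex.Gamma ((1 - s : ℝ) : ℂ)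
      * Complex.cos (Real.pi * ((1 - s : ℝ) : ℂ) / 2) =
      ((2 * (2 * Real.pi) ^ (-(1 - s)) * Real.Gamma (1 - s) * Real.cos (Real.pi * (1 - s) / 2) : ℝ) : ℂ) := by
    rw [Complex.Gamma_ofReal]
    push_cast
    rw [Complex.ofReal_cpow (by positivity)]
    push_cast
    rfl
  rw [a1, a2] at e
  unfold zetaR
  rw [e, Complex.re_ofReal_mul]
  have hc : Real.cos (Real.pi * (1 - s) / 2) ≤ 0 := by
    apply Real.cos_nonpos_of_pi_div_two_le_of_le <;> nlinarith [Real.pi_pos]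
  have hg : 0 < Real.Gamma (1 - s) := Real.Gamma_pos_of_pos (by linarith)
  apply mul_nonpos_of_nonpos_of_nonneg _ hz.le
  exact mul_nonpos_of_nonneg_of_nonpos (by positivity) hc

lemma zetaR_nonpos {s : ℝ} (h0 : -1 < s) (h1 : s < 1) : zetaR s ≤ 0 := by
  rcases lt_trichotomy s 0 with h | h | h
  · exact zetaR_neg_part h0 h
  · subst h
    norm_num [zetaR, riemannZeta_zero]
  · exact zetaR_pos_part h h1

lemma term_bd {α : ℝ} (hα : 0 < α) (n : ℕ) (hn : 1 ≤ n) :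
    α * ((n + 1 : ℕ) : ℝ) ^ (-(1 + α)) ≤ (n:ℝ) ^ (-α) - ((n + 1 : ℕ) : ℝ) ^ (-α) := by
  have hn0 : (0:ℝ) < n := by exact_mod_cast hn
  have hm : (0:ℝ) < ((n+1:ℕ):ℝ) := by positivity
  have e1 : ((n + 1 : ℕ) : ℝ) ^ (-(1 + α)) = ((n + 1 : ℕ) : ℝ) ^ (-α) * ((n + 1 : ℕ) : ℝ)⁻¹ := by
    rw [← Real.rpow_neg_one, ← Real.rpow_add hm]; ring_nf
  have hr : (0:ℝ) < n / ((n+1:ℕ):ℝ) := by positivity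
  have e2 : (n:ℝ) ^ (-α) = ((n + 1 : ℕ) : ℝ) ^ (-α) * (n / ((n+1:ℕ):ℝ)) ^ (-α) := by
    rw [← Real.mul_rpow hm.le hr.le]; congr 1; field_simp
  have hb : 1 + α * ((n + 1 : ℕ) : ℝ)⁻¹ ≤ (n / ((n+1:ℕ):ℝ)) ^ (-α) := by
    rw [Real.rpow_def_of_pos hr]
    have l1 := Real.log_le_sub_one_of_pos hr
    have l2 := Real.add_one_le_exp (Real.log (n / ((n+1:ℕ):ℝ)) * -α)
    have l3 : n / ((n+1:ℕ):ℝ) - 1 = - ((n + 1 : ℕ) : ℝ)⁻¹ := by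
      field_simp; push_cast; ring
    rw [l3] at l1
    nlinarith
  have hp : 0 < ((n + 1 : ℕ) : ℝ) ^ (-α) := Real.rpow_pos_of_pos hm _
  rw [e1, e2]
  nlinarith [mul_le_mul_of_nonneg_left hb hp.le]

lemma sum_bd' {α : ℝ} (hα : 0 < α) (n : ℕ) :
    α * ∑ k ∈ Finset.Icc 1 (n+1), (k:ℝ) ^ (-(1 + α)) ≤ α + 1 - ((n + 1 : ℕ) : ℝ) ^ (-α) := by
  induction n with
  | zero => simp
  | succ n ih =>
    rw [Finset.sum_Icc_succ_top (by omega), mul_add]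
    have := term_bd hα (n+1) (by omega)
    linarith

lemma sum_bd {α : ℝ} (hα : 0 < α) (n : ℕ) :
    ∑ k ∈ Finset.Icc 1 n, (k:ℝ) ^ (-(1 + α)) ≤ 1 + 1 / α := by
  cases n with
  | zero => simp; positivity
  | succ n =>
    have := sum_bd' hα n
    have hp : 0 ≤ ((n + 1 : ℕ) : ℝ) ^ (-α) := by positivity
    have e : 1 + 1/α = (α + 1)/α := by field_simp
    rw [e, le_div_iff₀ hα]
    linarith

lemma int_bd {α : ℝ} (hα : 0 < α) (a b : ℤ) :
    ∑ k ∈ (Finset.Icc a b).erase 0, |(k:ℝ)| ^ (-(1 + α)) ≤ 2 * (1 + 1 / α) := by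
  set N := max a.natAbs b.natAbs with hN
  have hsub : (Finset.Icc a b).erase 0 ⊆
      (Finset.Icc 1 N).image (fun n : ℕ => (n:ℤ)) ∪ (Finset.Icc 1 N).image (fun n : ℕ => -(n:ℤ)) := by
    intro k hk
    simp only [Finset.mem_erase, Finset.mem_Icc] at hk
    simp only [Finset.mem_union, Finset.mem_image, Finset.mem_Icc]
    rcases lt_or_gt_of_ne hk.1 with h | h
    · right; exact ⟨k.natAbs, by omega, by omega⟩
    · left; exact ⟨k.natAbs, by omega, by omega⟩
  have hnn : ∀ k : ℤ, 0 ≤ |(k:ℝ)| ^ (-(1 + α)) := fun k => by positivity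
  refine (Finset.sum_le_sum_of_subset_of_nonneg hsub fun k _ _ => hnn k).trans ?_
  have hu := Finset.sum_union_inter (s₁ := (Finset.Icc 1 N).image (fun n : ℕ => (n:ℤ)))
    (s₂ := (Finset.Icc 1 N).image (fun n : ℕ => -(n:ℤ))) (f := fun k : ℤ => |(k:ℝ)| ^ (-(1 + α)))
  have hi := Finset.sum_nonneg (s := (Finset.Icc 1 N).image (fun n : ℕ => (n:ℤ)) ∩
    (Finset.Icc 1 N).image (fun n : ℕ => -(n:ℤ))) fun k _ => hnn k
  rw [Finset.sum_image (by intro x _ y _ h; simpa using h),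
    Finset.sum_image (by intro x _ y _ h; simpa using h)] at hu
  simp only [Int.cast_neg, abs_neg, Int.cast_natCast, Nat.abs_cast] at hu
  have := sum_bd hα N
  linarith

lemma Cconst_pos {α : ℝ} (hα : 0 < α) (hα2 : α < 2) : 0 < Cconst α := by
  unfold Cconst
  have h1 : 0 < Real.Gamma ((1 + α) / 2) := Real.Gamma_pos_of_pos (by linarith)
  have h2 : 0 < Real.Gamma (1 - α / 2) := Real.Gamma_pos_of_pos (by linarith)
  have := Real.pi_pos
  positivity

/-- One forward Euler step preserves the bounds. -/
lemma euler_step {α ε h Δt M : ℝ} {J : ℤ}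
    (hα : 0 < α) (hα2 : α < 2) (hε : 0 < ε) (hh : 0 < h) (hΔt : 0 < Δt)
    (hCFL : Δt / h ^ α ≤ 1 / (2 * ε * Cconst α * (1 + 1 / α - zetaR (α - 1))))
    (hM : 0 ≤ M) (U : ℤ → ℝ) (hU : ∀ j, 0 ≤ U j ∧ U j ≤ M) (j : ℤ) :
    0 ≤ U j + Δt * Rnat α ε h J U j ∧ U j + Δt * Rnat α ε h J U j ≤ M := by
  unfold Rnat
  split_ifs with hj
  swap
  · simpa using hU j
  have hC := Cconst_pos hα hα2
  have hz : zetaR (α - 1) ≤ 0 := zetaR_nonpos (by linarith) (by linarith)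
  set z := -zetaR (α - 1) with hzdef
  have hz0 : 0 ≤ z := by linarith
  set c := ε * Cconst α * (Δt / h ^ α) with hc
  have hhp : 0 < h ^ α := Real.rpow_pos_of_pos hh _
  have hc0 : 0 < c := by positivity
  have hK : c * (2 * (1 + 1 / α + z)) ≤ 1 := by
    have hpos : 0 < 2 * ε * Cconst α * (1 + 1 / α - zetaR (α - 1)) := by
      have : 0 < 1 + 1 / α - zetaR (α - 1) := by
        have : 0 < 1 / α := by positivity
        linarith
      positivity
    rw [le_div_iff₀ hpos] at hCFL
    calc _ = Δt / h ^ α * (2 * ε * Cconst α * (1 + 1 / α - zetaR (α - 1))) := by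
          rw [hc, hzdef]; ring
      _ ≤ 1 := hCFL
  set S := (Finset.Icc (-J - j) (J - j)).erase 0 with hS
  set w : ℤ → ℝ := fun k => (if k = -J - j ∨ k = J - j then (1 : ℝ) / 2 else 1) *
    |(k:ℝ)| ^ (-(1 + α)) with hw
  have hw0 : ∀ k, 0 ≤ w k := by
    intro k
    simp only [hw]
    split_ifs <;> positivity
  have hws : ∑ k ∈ S, w k ≤ 2 * (1 + 1 / α) := by
    refine le_trans (Finset.sum_le_sum fun k _ => ?_) (int_bd hα (-J - j) (J - j))
    have : 0 ≤ |(k:ℝ)| ^ (-(1 + α)) := by positivity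
    simp only [hw]
    split_ifs <;> linarith
  have hd : ε * Cconst α * h * dsum (-J - j) (J - j)
      (fun k => (U (j + k) - U j) / |(k : ℝ) * h| ^ (1 + α)) * Δt =
      c * (∑ k ∈ S, w k * U (j + k) - (∑ k ∈ S, w k) * U j) := by
    rw [Finset.sum_mul, ← Finset.sum_sub_distrib]
    unfold dsum
    rw [Finset.mul_sum, Finset.sum_mul, Finset.mul_sum]
    apply Finset.sum_congr rfl
    intro k hk
    have e1 : |(k:ℝ) * h| ^ (1 + α) = |(k:ℝ)| ^ (1 + α) * (h * h ^ α) := by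
      rw [abs_mul, abs_of_pos hh, Real.mul_rpow (abs_nonneg _) hh.le, Real.rpow_add hh,
        Real.rpow_one]
    have hk0 : (k:ℝ) ≠ 0 := by
      exact_mod_cast (Finset.mem_erase.1 hk).1
    have hkp : 0 < |(k:ℝ)| ^ (1 + α) := Real.rpow_pos_of_pos (abs_pos.2 hk0) _
    simp only [hw, hc]
    rw [e1, Real.rpow_neg (abs_nonneg _)]
    field_simp
  have hq : -(ε * Cconst α * zetaR (α - 1) * h ^ (-α)) * (U (j - 1) - 2 * U j + U (j + 1)) * Δt
      = c * z * (U (j - 1) - 2 * U j + U (j + 1)) := by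
    rw [hc, hzdef, Real.rpow_neg hh.le]
    field_simp
  have key : U j + Δt * (-(ε * Cconst α * zetaR (α - 1) * h ^ (-α)) *
      (U (j - 1) - 2 * U j + U (j + 1)) + ε * Cconst α * h * dsum (-J - j) (J - j)
      (fun k => (U (j + k) - U j) / |(k : ℝ) * h| ^ (1 + α))) =
      (1 - c * (2 * z + ∑ k ∈ S, w k)) * U j + c * z * U (j - 1) + c * z * U (j + 1)
        + c * ∑ k ∈ S, w k * U (j + k) := by
    linear_combination hq + hd
  rw [key]
  have hT0 : 0 ≤ ∑ k ∈ S, w k * U (j + k) :=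
    Finset.sum_nonneg fun k _ => mul_nonneg (hw0 k) (hU _).1
  have hTM : ∑ k ∈ S, w k * U (j + k) ≤ (∑ k ∈ S, w k) * M := by
    rw [Finset.sum_mul]
    exact Finset.sum_le_sum fun k _ => mul_le_mul_of_nonneg_left (hU _).2 (hw0 k)
  have hD : 0 ≤ 1 - c * (2 * z + ∑ k ∈ S, w k) := by
    have := mul_le_mul_of_nonneg_left hws hc0.le
    linarith
  have hcz : 0 ≤ c * z := by positivity
  constructor
  · have a1 := mul_nonneg hD (hU j).1
    have a2 := mul_nonneg hcz (hU (j-1)).1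
    have a3 := mul_nonneg hcz (hU (j+1)).1
    have a4 := mul_nonneg hc0.le hT0
    linarith
  · have a1 := mul_le_mul_of_nonneg_left (hU j).2 hD
    have a2 := mul_le_mul_of_nonneg_left (hU (j-1)).2 hcz
    have a3 := mul_le_mul_of_nonneg_left (hU (j+1)).2 hcz
    have a4 := mul_le_mul_of_nonneg_left hTM hc0.le
    linarith

/-- Discrete maximum principle for the third-order TVD Runge-Kutta discretization of
the semi-discrete scheme with the natural condition. -/
theorem stmt_3 (α ε h Δt M : ℝ) (J : ℤ)
    (hα : 0 < α) (hα2 : α < 2) (hε : 0 < ε) (hJ : 1 ≤ J)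
    (hh : 0 < h) (hΔt : 0 < Δt)
    (P : ℕ → ℤ → ℝ) (U1 U2 : ℕ → ℤ → ℝ)
    (hbc0 : ∀ j : ℤ, J ≤ |j| → P 0 j = 0)
    (hU1 : ∀ n : ℕ, ∀ j : ℤ, U1 n j = P n j + Δt * Rnat α ε h J (P n) j)
    (hU2 : ∀ n : ℕ, ∀ j : ℤ, U2 n j =
      3 / 4 * P n j + 1 / 4 * U1 n j + 1 / 4 * Δt * Rnat α ε h J (U1 n) j)
    (hP : ∀ n : ℕ, ∀ j : ℤ, P (n + 1) j =
      1 / 3 * P n j + 2 / 3 * U2 n j + 2 / 3 * Δt * Rnat α ε h J (U2 n) j)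
    (hCFL : Δt / h ^ α ≤ 1 / (2 * ε * Cconst α * (1 + 1 / α - zetaR (α - 1))))
    (hM : 0 ≤ M)
    (hinit : ∀ j : ℤ, 0 ≤ P 0 j ∧ P 0 j ≤ M) :
    ∀ n : ℕ, ∀ j : ℤ, 0 ≤ P n j ∧ P n j ≤ M := by
  intro n
  induction n with
  | zero => exact hinit
  | succ n ih =>
    have E := euler_step (J := J) hα hα2 hε hh hΔt hCFL hM
    have h1 : ∀ j, 0 ≤ U1 n j ∧ U1 n j ≤ M := fun j => by
      rw [hU1]; exact E (P n) ih j
    have h2 : ∀ j, 0 ≤ U2 n j ∧ U2 n j ≤ M := fun j => by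
      have a := E (U1 n) h1 j
      have b := ih j
      rw [hU2]
      constructor <;> linarith [a.1, a.2, b.1, b.2]
    intro j
    have a := E (U2 n) h2 j
    have b := ih j
    rw [hP]
    constructor <;> linarith [a.1, a.2, b.1, b.2]
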